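/- Let D ⊆ ℂ be open and let B, f, f⋆, ψ⋆, ω, σ : D → ℂ be real-differentiable on D. Assume: ∂_{λ̄} f = B·conj(f), ∂_{λ̄} f⋆ = −conj(B)·conj(f⋆), ∂_{λ̄} ψ⋆ = −conj(B)·conj(ψ⋆) on D; ω satisfies ∂_λ ω = f·f⋆, ∂_{λ̄} ω = −conj(f·f⋆), conj(ω) = −ω and ω(λ) ≠ 0 on D; σ satisfies ∂_λ σ = f·ψ⋆, ∂_{λ̄} σ = −conj(f·ψ⋆) and conj(σ) = −σ on D. Then the Moutard-transformed function ψ̃⋆ := ψ⋆ − (σ/ω)·f⋆ satisfies ∂_{λ̄} ψ̃⋆ = −conj(B̃)·conj(ψ̃⋆) on D, where B̃ := B + f·conj(f⋆)/ω. -/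

import Mathlib

open Complex ComplexConjugate

/-- Wirtinger derivative `∂_{λ̄} u` of `u : ℂ → ℂ`, viewed as a real-differentiable map. -/
noncomputable def dbar (u : ℂ → ℂ) (l : ℂ) : ℂ :=
  (1 / 2 : ℂ) * ((fderiv ℝ u l) 1 + Complex.I * (fderiv ℝ u l) Complex.I)

/-- Wirtinger derivative `∂_λ u`. -/
noncomputable def dz (u : ℂ → ℂ) (l : ℂ) : ℂ :=
  (1 / 2 : ℂ) * ((fderiv ℝ u l) 1 - Complex.I * (fderiv ℝ u l) Complex.I)

/-!
Since `σ` and `ω` are both imaginary, the quotient `q = σ/ω` is real. The quotient rule and the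
reality of `q` give `∂_{λ̄} q = -conj (f·ψ̃⋆)/ω`, so that `q` is driven by the transformed function
itself. In `∂_{λ̄} ψ̃⋆ = ∂_{λ̄} ψ⋆ - q·∂_{λ̄} f⋆ - f⋆·∂_{λ̄} q` the first two terms combine, again
because `q` is real, to `-conj B·conj ψ̃⋆`, and the last one is the change of potential.
-/

section Wirtinger

variable {u v : ℂ → ℂ} {l : ℂ}

theorem dbar_fun_sub (hu : DifferentiableAt ℝ u l) (hv : DifferentiableAt ℝ v l) :
    dbar (fun w => u w - v w) l = dbar u l - dbar v l := by
  simp only [dbar, fderiv_fun_sub hu hv, sub_apply]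
  ring

theorem dbar_fun_mul (hu : DifferentiableAt ℝ u l) (hv : DifferentiableAt ℝ v l) :
    dbar (fun w => u w * v w) l = u l * dbar v l + v l * dbar u l := by
  simp only [dbar, fderiv_fun_mul hu hv, add_apply, smul_apply, smul_eq_mul]
  ring

theorem dbar_comp_of_hasDerivAt {g : ℂ → ℂ} {g' : ℂ} (hg : HasDerivAt g g' (u l))
    (hu : DifferentiableAt ℝ u l) : dbar (fun w => g (u w)) l = g' * dbar u l := by
  have hcomp : fderiv ℝ (fun w => g (u w)) l = g' • fderiv ℝ u l :=
    (hg.comp_hasFDerivAt l hu.hasFDerivAt).fderiv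
  simp only [dbar, hcomp, smul_apply, smul_eq_mul]
  ring

theorem dbar_fun_inv (hu : DifferentiableAt ℝ u l) (hul : u l ≠ 0) :
    dbar (fun w => (u w)⁻¹) l = -dbar u l / u l ^ 2 := by
  rw [dbar_comp_of_hasDerivAt (hasDerivAt_inv hul) hu]
  ring

theorem dbar_fun_div (hu : DifferentiableAt ℝ u l) (hv : DifferentiableAt ℝ v l)
    (hvl : v l ≠ 0) :
    dbar (fun w => u w / v w) l = (dbar u l - u l / v l * dbar v l) / v l := by
  simp only [div_eq_mul_inv (u _)]
  rw [dbar_fun_mul hu (hv.fun_inv hvl), dbar_fun_inv hv hvl]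
  ring

end Wirtinger

theorem conj_div_of_conj_eq_neg {K : Type*} [Field K] [StarRing K] {a b : K}
    (ha : conj a = -a) (hb : conj b = -b) : conj (a / b) = a / b := by
  rw [map_div₀, ha, hb, neg_div_neg_eq]

section Moutard

variable {B f fs ψs ω σ : ℂ → ℂ} {l : ℂ}

theorem dbar_moutard_quotient
    (hωdiff : DifferentiableAt ℝ ω l) (hσdiff : DifferentiableAt ℝ σ l)
    (hω : dbar ω l = -conj (f l * fs l)) (hω_imag : conj (ω l) = -ω l) (hω_ne : ω l ≠ 0)
    (hσ : dbar σ l = -conj (f l * ψs l)) (hσ_imag : conj (σ l) = -σ l) :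
    dbar (fun w => σ w / ω w) l = -conj (f l * (ψs l - σ l / ω l * fs l)) / ω l := by
  have hq_real : conj (σ l / ω l) = σ l / ω l := conj_div_of_conj_eq_neg hσ_imag hω_imag
  rw [dbar_fun_div hσdiff hωdiff hω_ne, hσ, hω]
  simp only [map_mul, map_sub, hq_real]
  ring

theorem moutard_transform_psi_star_general
    (hfsdiff : DifferentiableAt ℝ fs l) (hψsdiff : DifferentiableAt ℝ ψs l)
    (hωdiff : DifferentiableAt ℝ ω l) (hσdiff : DifferentiableAt ℝ σ l)
    (hfs : dbar fs l = -conj (B l) * conj (fs l))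
    (hψs : dbar ψs l = -conj (B l) * conj (ψs l))
    (hω : dbar ω l = -conj (f l * fs l)) (hω_imag : conj (ω l) = -ω l) (hω_ne : ω l ≠ 0)
    (hσ : dbar σ l = -conj (f l * ψs l)) (hσ_imag : conj (σ l) = -σ l) :
    dbar (fun w => ψs w - σ w / ω w * fs w) l =
      -conj (B l + f l * conj (fs l) / ω l) * conj (ψs l - σ l / ω l * fs l) := by
  have hq_diff : DifferentiableAt ℝ (fun w => σ w / ω w) l := by
    simpa only [div_eq_mul_inv] using hσdiff.fun_mul (hωdiff.fun_inv hω_ne)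
  have hq_real : conj (σ l / ω l) = σ l / ω l := conj_div_of_conj_eq_neg hσ_imag hω_imag
  have hq_dbar := dbar_moutard_quotient hωdiff hσdiff hω hω_imag hω_ne hσ hσ_imag
  have h_potential :
      conj (B l + f l * conj (fs l) / ω l) = conj (B l) - conj (f l) * fs l / ω l := by
    simp only [map_add, map_div₀, map_mul, conj_conj, hω_imag, div_neg, sub_eq_add_neg]
  calc dbar (fun w => ψs w - σ w / ω w * fs w) l
      = dbar ψs l - (σ l / ω l * dbar fs l + fs l * dbar (fun w => σ w / ω w) l) := by
        rw [dbar_fun_sub hψsdiff (hq_diff.fun_mul hfsdiff), dbar_fun_mul hq_diff hfsdiff]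
    _ = -(conj (B l) - conj (f l) * fs l / ω l) * conj (ψs l - σ l / ω l * fs l) := by
        rw [hψs, hfs, hq_dbar]
        simp only [map_mul, map_sub, hq_real]
        ring
    _ = _ := by rw [h_potential]

end Moutard

/-- Moutard-type transform for the conjugate equation:
`ψ̃⋆ = ψ⋆ - (σ/ω)·f⋆` satisfies `∂_{λ̄} ψ̃⋆ = -conj(B̃)·conj ψ̃⋆`
with `B̃ = B + f·conj(f⋆)/ω`. -/
theorem moutard_transform_psi_star
    (D : Set ℂ) (hD : IsOpen D)
    (B f fs ψs ω σ : ℂ → ℂ)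
    (hBdiff : ∀ l ∈ D, DifferentiableAt ℝ B l)
    (hfdiff : ∀ l ∈ D, DifferentiableAt ℝ f l)
    (hfsdiff : ∀ l ∈ D, DifferentiableAt ℝ fs l)
    (hψsdiff : ∀ l ∈ D, DifferentiableAt ℝ ψs l)
    (hωdiff : ∀ l ∈ D, DifferentiableAt ℝ ω l)
    (hσdiff : ∀ l ∈ D, DifferentiableAt ℝ σ l)
    (hf : ∀ l ∈ D, dbar f l = B l * conj (f l))
    (hfs : ∀ l ∈ D, dbar fs l = -conj (B l) * conj (fs l))
    (hψs : ∀ l ∈ D, dbar ψs l = -conj (B l) * conj (ψs l))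
    (hω1 : ∀ l ∈ D, dz ω l = f l * fs l)
    (hω2 : ∀ l ∈ D, dbar ω l = -conj (f l * fs l))
    (hω3 : ∀ l ∈ D, conj (ω l) = -ω l)
    (hω4 : ∀ l ∈ D, ω l ≠ 0)
    (hσ1 : ∀ l ∈ D, dz σ l = f l * ψs l)
    (hσ2 : ∀ l ∈ D, dbar σ l = -conj (f l * ψs l))
    (hσ3 : ∀ l ∈ D, conj (σ l) = -σ l) :
    ∀ l ∈ D,
      dbar (fun w => ψs w - (σ w / ω w) * fs w) l =
        -conj (B l + f l * conj (fs l) / ω l) * conj (ψs l - (σ l / ω l) * fs l) := by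
  intro l hl
  exact moutard_transform_psi_star_general (hfsdiff l hl) (hψsdiff l hl) (hωdiff l hl)
    (hσdiff l hl) (hfs l hl) (hψs l hl) (hω2 l hl) (hω3 l hl) (hω4 l hl) (hσ2 l hl) (hσ3 l hl)
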